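/- Let α ∈ (0,1/2), q = Φ^{-1}(1−α) > 0, η > 0, and let X1 ~ N(γ, ν²) and S1 ~ N(μ, σ²) be independent with σ, ν > 0, γ > ν·q and μ > max(1, σ·q). For w ∈ [0,1] let R0^w be the unique positive solution of VaR_α(R0^w(wS1+1−w) − X1) = 0, and set V0^w = R0^w − E[(R0^w(wS1+1−w) − X1)^+]/(1+η). Then V0^w ≤ V0^0 for all w ∈ (0, ŵ), where ŵ = 1 if μ ≥ 1 + σq and otherwise ŵ = 2(μ−1)νq / ((1 + σq − μ)(μ − 1 + σq)(γ + νq)). -/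

import Mathlib

open MeasureTheory ProbabilityTheory Real Set

noncomputable def VaR {Ω : Type*} [MeasurableSpace Ω] (P : Measure Ω) (β : ℝ) (Y : Ω → ℝ) : ℝ :=
  sInf {y : ℝ | 1 - β ≤ (P {ω | -Y ω ≤ y}).toReal}

noncomputable def ES {Ω : Type*} [MeasurableSpace Ω] (P : Measure Ω) (α : ℝ) (Y : Ω → ℝ) : ℝ :=
  (1 / α) * ∫ β in (0:ℝ)..α, VaR P β Y

noncomputable def stdNormalCDF (x : ℝ) : ℝ := ((gaussianReal 0 1) (Iic x)).toReal

noncomputable def stdNormalPDF (x : ℝ) : ℝ := (Real.sqrt (2 * π))⁻¹ * Real.exp (-x ^ 2 / 2)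

lemma aux_std {Ω : Type*} [MeasurableSpace Ω] (P : Measure Ω) (Y : Ω → ℝ) (m s : ℝ)
    (h : P.map Y = gaussianReal m (s ^ 2).toNNReal) :
    P.map Y = (gaussianReal 0 1).map (fun z => m + s * z) := by
  have : (fun z : ℝ => m + s * z) = (fun z => m + z) ∘ (fun z => s * z) := rfl
  rw [this, ← Measure.map_map (by fun_prop) (by fun_prop), gaussianReal_map_const_mul,
    gaussianReal_map_const_add, h]
  congr 1
  · ring
  · ext
    simp [sq_nonneg]

lemma aux_cdf : StrictMono stdNormalCDF := by
  intro a b hab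
  unfold stdNormalCDF
  have h1 : (gaussianReal 0 1) (Iic b) = gaussianReal 0 1 (Iic a) + gaussianReal 0 1 (Ioc a b) := by
    rw [← measure_union _ measurableSet_Ioc, Iic_union_Ioc_eq_Iic hab.le]
    exact Iic_disjoint_Ioc le_rfl
  have h2 : gaussianReal 0 1 (Ioc a b) ≠ 0 := by
    intro h
    have := gaussianReal_absolutelyContinuous' 0 (one_ne_zero) h
    simp at this
    linarith
  rw [h1, ENNReal.toReal_add (measure_ne_top _ _) (measure_ne_top _ _)]
  have := ENNReal.toReal_pos h2 (measure_ne_top _ _)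
  linarith

lemma aux_VaR {Ω : Type*} [MeasurableSpace Ω] (P : Measure Ω) (Y : Ω → ℝ) (hY : Measurable Y)
    (m s α q : ℝ) (hs : 0 < s) (hq : stdNormalCDF q = 1 - α)
    (h : P.map Y = gaussianReal m (s ^ 2).toNNReal) : VaR P α Y = - m + s * q := by
  have hN : P.map (fun ω => - Y ω) = gaussianReal (-m) (s ^ 2).toNNReal := by
    have : (fun ω => - Y ω) = (fun x => -x) ∘ Y := rfl
    rw [this, ← Measure.map_map (by fun_prop) hY, h, gaussianReal_map_neg]
  have hN' := aux_std P _ _ _ hN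
  have hset : {y : ℝ | 1 - α ≤ (P {ω | -Y ω ≤ y}).toReal} = Ici (-m + s * q) := by
    ext y
    have e : (P {ω | -Y ω ≤ y}).toReal = stdNormalCDF ((y + m) / s) := by
      have e1 : P {ω | -Y ω ≤ y} = P.map (fun ω => - Y ω) (Iic y) := by
        rw [Measure.map_apply (by fun_prop) measurableSet_Iic]; rfl
      rw [e1, hN', Measure.map_apply (by fun_prop) measurableSet_Iic]
      unfold stdNormalCDF
      congr 2
      ext z
      simp only [mem_preimage, mem_Iic]
      rw [le_div_iff₀ hs]
      constructor <;> intro <;> linarith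
    rw [mem_ofPred_eq, e, ← hq, aux_cdf.le_iff_le, le_div_iff₀ hs, mem_Ici]
    constructor <;> intro <;> linarith
  rw [VaR, hset, csInf_Ici]

lemma aux_int {Ω : Type*} [MeasurableSpace Ω] (P : Measure Ω) (Y : Ω → ℝ) (hY : Measurable Y)
    (m s q : ℝ) (hs : 0 < s) (hm : m = s * q)
    (h : P.map Y = gaussianReal m (s ^ 2).toNNReal) :
    ∫ ω, max (Y ω) 0 ∂P = s * ∫ z, max (q + z) 0 ∂(gaussianReal 0 1) := by
  have e : ∫ ω, max (Y ω) 0 ∂P = ∫ y, max y 0 ∂(P.map Y) := by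
    rw [integral_map hY.aemeasurable]
    exact (by fun_prop : Measurable fun y : ℝ => max y 0).aestronglyMeasurable
  rw [e, aux_std P Y m s h, integral_map (by fun_prop), ← integral_const_mul]
  · congr 1
    ext z
    rw [hm, ← mul_add, mul_max_of_nonneg _ _ hs.le, mul_zero]
  · exact (by fun_prop : Measurable fun y : ℝ => max y 0).aestronglyMeasurable

lemma aux_law {Ω : Type*} [MeasurableSpace Ω] (P : Measure Ω) [IsProbabilityMeasure P]
    (γ ν μ σ : ℝ) (X1 S1 : Ω → ℝ) (hX1m : Measurable X1) (hS1m : Measurable S1)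
    (hX : P.map X1 = gaussianReal γ (ν ^ 2).toNNReal)
    (hS : P.map S1 = gaussianReal μ (σ ^ 2).toNNReal)
    (hindep : IndepFun X1 S1 P) (r w : ℝ) :
    P.map (fun ω => r * (w * S1 ω + 1 - w) - X1 ω) =
      gaussianReal (r * (1 + w * (μ - 1)) - γ)
        ((√(r ^ 2 * w ^ 2 * σ ^ 2 + ν ^ 2)) ^ 2).toNNReal := by
  have h1 : P.map (fun ω => r * (1 - w) + r * w * S1 ω) =
      gaussianReal (r * w * μ + r * (1 - w)) (.mk ((r * w) ^ 2) (sq_nonneg _) * (σ ^ 2).toNNReal) := by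
    have : (fun ω => r * (1 - w) + r * w * S1 ω) =
      (fun x => r * (1 - w) + x) ∘ (fun x => r * w * x) ∘ S1 := rfl
    rw [this, ← Measure.map_map (by fun_prop) (by fun_prop), 
      ← Measure.map_map (by fun_prop) (by fun_prop), hS, gaussianReal_map_const_mul,
      gaussianReal_map_const_add]
  have h2 : P.map (fun ω => - X1 ω) = gaussianReal (-γ) (ν ^ 2).toNNReal := by
    have : (fun ω => - X1 ω) = (fun x => -x) ∘ X1 := rfl
    rw [this, ← Measure.map_map (by fun_prop) hX1m, hX, gaussianReal_map_neg]
  have hi : IndepFun (fun ω => r * (1 - w) + r * w * S1 ω) (fun ω => - X1 ω) P :=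
    hindep.symm.comp (φ := fun x => r * (1 - w) + r * w * x) (ψ := fun x => -x)
      (by fun_prop) (by fun_prop)
  have h3 := gaussianReal_add_gaussianReal_of_indepFun hi h1 h2
  have e : (fun ω => r * (w * S1 ω + 1 - w) - X1 ω) =
      (fun ω => r * (1 - w) + r * w * S1 ω) + (fun ω => - X1 ω) := by
    ext ω; simp only [Pi.add_apply]; ring
  rw [e, h3]
  congr 1
  · ring
  · ext
    rw [Real.sq_sqrt (by positivity), Real.coe_toNNReal _ (by positivity)]
    simp only [NNReal.coe_add, NNReal.coe_mul, NNReal.coe_mk,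
      Real.coe_toNNReal _ (sq_nonneg _)]
    ring

lemma aux_alg (q γ ν μ σ w r s : ℝ) (hq0 : 0 < q) (hν : 0 < ν) (hσ : 0 < σ)
    (hγ : ν * q < γ) (h1 : 1 < μ) (h2 : σ * q < μ) (hw : 0 < w) (hw1 : w ≤ 1)
    (hs : 0 < s) (hss : s ^ 2 = r ^ 2 * w ^ 2 * σ ^ 2 + ν ^ 2)
    (hr : 0 < r) (he : r * (1 + w * (μ - 1)) - γ = s * q)
    (hc : (γ + ν * q) * w * ((σ * q) ^ 2 - (μ - 1) ^ 2) ≤ 2 * (μ - 1) * ν * q) :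
    r ≤ γ + ν * q := by
  by_contra! hlt
  have hνq : 0 < ν * q := by positivity
  set A := γ + ν * q with hA
  have hA0 : 0 < A := by linarith
  -- f(A) ≥ 0
  have hwm : 0 < w * (μ - 1) := mul_pos hw (by linarith)
  have hT : 0 < ν * q + A * (w * (μ - 1)) := by positivity
  have hf : (q * (A * w * σ)) ^ 2 + (q * ν) ^ 2 ≤ (ν * q + A * (w * (μ - 1))) ^ 2 := by
    have := mul_le_mul_of_nonneg_left hc (by positivity : 0 ≤ A * w)
    clear_value A
    linarith
  set T := ν * q + A * (w * (μ - 1)) with hTdef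
  have hb : w * σ * q < 1 + w * (μ - 1) := by
    have := mul_pos hw (sub_pos.2 h2)
    linarith
  -- s q ≤ T + (r - A) * w σ q
  have hd : 0 < r - A := by linarith
  have hTA : A * w * σ * q ≤ T := by
    refine (abs_le_of_sq_le_sq' ?_ hT.le).2
    have e1 : (A * w * σ * q) ^ 2 = (q * (A * w * σ)) ^ 2 := by ring
    rw [e1]
    linarith [sq_nonneg (q * ν)]
  have hsq : s * q ≤ T + (r - A) * (w * σ * q) := by
    have hx : 0 ≤ (r - A) * (w * σ * q) := by positivity
    refine abs_le_of_sq_le_sq' ?_ (by positivity) |>.2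
    have h5 := mul_le_mul_of_nonneg_left hTA hx
    have : (s * q) ^ 2 = (r * w * σ * q) ^ 2 + (q * ν) ^ 2 := by rw [mul_pow, hss]; ring
    rw [this]
    have e2 : (r * w * σ * q) ^ 2 = (q * (A * w * σ)) ^ 2 +
        2 * ((r - A) * (w * σ * q) * (A * w * σ * q)) + ((r - A) * (w * σ * q)) ^ 2 := by ring
    have e3 : (T + (r - A) * (w * σ * q)) ^ 2 = T ^ 2 +
        2 * ((r - A) * (w * σ * q) * T) + ((r - A) * (w * σ * q)) ^ 2 := by ring
    linarith
  have h6 := mul_lt_mul_of_pos_left hb hd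
  have h7 : r * (1 + w * (μ - 1)) - γ = T + (r - A) * (1 + w * (μ - 1)) := by
    rw [hTdef, hA]; ring
  linarith

/-- the premium `V0^w` is at most the risk-less premium `V0^0`
for all weights `w ∈ (0, ŵ)`. -/
theorem V0_risky_le_V0_riskless
    {Ω : Type*} [MeasurableSpace Ω] (P : Measure Ω) [IsProbabilityMeasure P]
    (α q η γ ν μ σ : ℝ) (hα : α ∈ Ioo (0:ℝ) (1/2))
    (hq : stdNormalCDF q = 1 - α) (hq0 : 0 < q) (hη : 0 < η)
    (hν : 0 < ν) (hσ : 0 < σ) (hγ : ν * q < γ) (hμ : max 1 (σ * q) < μ)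
    (X1 S1 : Ω → ℝ) (hX1m : Measurable X1) (hS1m : Measurable S1)
    (hX : P.map X1 = gaussianReal γ (ν ^ 2).toNNReal)
    (hS : P.map S1 = gaussianReal μ (σ ^ 2).toNNReal)
    (hindep : IndepFun X1 S1 P)
    (R : ℝ → ℝ)
    (hR : ∀ w ∈ Icc (0:ℝ) 1, 0 < R w ∧
        VaR P α (fun ω => R w * (w * S1 ω + 1 - w) - X1 ω) = 0)
    (hRuniq : ∀ w ∈ Icc (0:ℝ) 1, ∀ r : ℝ, 0 < r →
        VaR P α (fun ω => r * (w * S1 ω + 1 - w) - X1 ω) = 0 → r = R w) :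
    ∀ w : ℝ, 0 < w → w ≤ 1 →
      w < (if 1 + σ * q ≤ μ then 1
           else 2 * (μ - 1) * ν * q
              / ((1 + σ * q - μ) * (μ - 1 + σ * q) * (γ + ν * q))) →
      R w - (∫ ω, max (R w * (w * S1 ω + 1 - w) - X1 ω) 0 ∂P) / (1 + η)
        ≤ R 0 - (∫ ω, max (R 0 - X1 ω) 0 ∂P) / (1 + η) := by
  intro w hw hw1 hwlt
  obtain ⟨h1, h2⟩ := max_lt_iff.1 hμ
  have key : ∀ w ∈ Icc (0:ℝ) 1,
      (R w * (1 + w * (μ - 1)) - γ = √((R w) ^ 2 * w ^ 2 * σ ^ 2 + ν ^ 2) * q) ∧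
      ∫ ω, max (R w * (w * S1 ω + 1 - w) - X1 ω) 0 ∂P =
        √((R w) ^ 2 * w ^ 2 * σ ^ 2 + ν ^ 2) * ∫ z, max (q + z) 0 ∂(gaussianReal 0 1) := by
    intro w hw
    have hl := aux_law P γ ν μ σ X1 S1 hX1m hS1m hX hS hindep (R w) w
    have hs : 0 < √((R w) ^ 2 * w ^ 2 * σ ^ 2 + ν ^ 2) := Real.sqrt_pos.2 (by positivity)
    have hv := aux_VaR P _ (by fun_prop) _ _ α q hs hq hl
    rw [(hR w hw).2] at hv
    have hm : R w * (1 + w * (μ - 1)) - γ = √((R w) ^ 2 * w ^ 2 * σ ^ 2 + ν ^ 2) * q := by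
      linarith
    exact ⟨hm, aux_int P _ (by fun_prop) _ _ q hs hm hl⟩
  obtain ⟨a0, b0⟩ := key 0 (by simp)
  obtain ⟨aw, bw⟩ := key w ⟨hw.le, hw1⟩
  have hs0 : √((R 0) ^ 2 * 0 ^ 2 * σ ^ 2 + ν ^ 2) = ν := by
    rw [show (R 0) ^ 2 * 0 ^ 2 * σ ^ 2 + ν ^ 2 = ν ^ 2 by ring, Real.sqrt_sq hν.le]
  rw [hs0] at a0 b0
  have b0' : ∫ ω, max (R 0 - X1 ω) 0 ∂P = ν * ∫ z, max (q + z) 0 ∂(gaussianReal 0 1) := by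
    rw [← b0]; simp
  have hc0 : 0 ≤ ∫ z, max (q + z) 0 ∂(gaussianReal 0 1) :=
    integral_nonneg fun z => le_max_right _ _
  have hνs : ν ≤ √((R w) ^ 2 * w ^ 2 * σ ^ 2 + ν ^ 2) :=
    Real.le_sqrt_of_sq_le (by nlinarith [sq_nonneg (R w * w * σ)])
  have hνq : 0 < ν * q := by positivity
  have hle : R w ≤ γ + ν * q := by
    refine aux_alg q γ ν μ σ w (R w) _ hq0 hν hσ hγ h1 h2 hw hw1
      (lt_of_lt_of_le hν hνs) (Real.sq_sqrt (by positivity)) (hR w ⟨hw.le, hw1⟩).1 aw ?_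
    have hA : 0 < (γ + ν * q) := by linarith
    have hp : 0 < (μ - 1) * (ν * q) := mul_pos (by linarith) hνq
    split_ifs at hwlt with hif
    · have : (σ * q) ^ 2 ≤ (μ - 1) ^ 2 := pow_le_pow_left₀ (by positivity) (by linarith) 2
      have : (γ + ν * q) * w * ((σ * q) ^ 2 - (μ - 1) ^ 2) ≤ 0 :=
        mul_nonpos_of_nonneg_of_nonpos (by positivity) (by linarith)
      linarith
    · push Not at hif
      have hσq : 0 < σ * q := by positivity
      have hD : 0 < (1 + σ * q - μ) * (μ - 1 + σ * q) * (γ + ν * q) :=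
        mul_pos (mul_pos (by linarith) (by linarith)) hA
      rw [lt_div_iff₀ hD] at hwlt
      nlinarith
  rw [bw, b0']
  have h3 : ν * (∫ z, max (q + z) 0 ∂(gaussianReal 0 1)) / (1 + η) ≤
      √((R w) ^ 2 * w ^ 2 * σ ^ 2 + ν ^ 2) * (∫ z, max (q + z) 0 ∂(gaussianReal 0 1)) / (1 + η) := by
    gcongr
  linarith
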